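/- Let L ⊆ V ⊕ ∧^k V* be a standard weakly lagrangian subspace (i.e., weakly lagrangian with Ann(pr₁(L))° = pr₁(L)) such that pr₁(L) ≠ {0}. Then e^B(L) is weakly lagrangian for every B ∈ ∧^{k+1} V* if and only if L is lagrangian (L = L⊥). -/

import Mathlib

/-!
The transform `e^B` preserves the pairing, because `i_X i_Y B + i_Y i_X B = 0`; hence it sends
lagrangian subspaces to lagrangian subspaces, and lagrangian subspaces are weakly lagrangian since
`(X, 0) ∈ L^⊥` means exactly `X ∈ pr₂(L)°`.

Conversely, `e^B(L)` being weakly lagrangian means (beyond isotropy) that `(X, -i_X B) ∈ L^⊥`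
implies `(X, -i_X B) ∈ L`. By `iprod_self` and `exists_iprod_eq`, for `X ≠ 0` the forms `i_X B` are exactly those
killed by `i_X`. So fix `(X, γ) ∈ L` with `X ≠ 0`; isotropy gives `i_X γ = 0`, and for
`α ∈ Ann(pr₁(L))` the vector `(X, γ + α)` lies in `L^⊥` and is of the form `(X, -i_X B)`. Hence it
lies in `L`, and so does `(0, α)`. Thus `L` contains `0 ⊕ Ann(pr₁(L))`. Any `(X, α) ∈ L^⊥` then
satisfies `X ∈ Ann(pr₁(L))° = pr₁(L)`, so it differs from an element of `L` by an element of
`L^⊥ ∩ (0 ⊕ ∧^k V^*) = 0 ⊕ Ann(pr₁(L))`, and therefore lies in `L`.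
-/

open Module Submodule

noncomputable section

/-- `∧^m V^*`, modeled as alternating `m`-linear forms on `V`. -/
abbrev Alt (V : Type*) [AddCommGroup V] [Module ℝ V] (m : ℕ) :=
  V [⋀^Fin m]→ₗ[ℝ] ℝ

/-- The interior product `i_X : ∧^{m+1} V^* → ∧^m V^*`, as a linear map in the form. -/
def iprod (V : Type*) [AddCommGroup V] [Module ℝ V] (m : ℕ) (X : V) :
    Alt V (m + 1) →ₗ[ℝ] Alt V m :=
  AlternatingMap.curryLeftLinearMap.flip X

lemma iprod_add_left {V : Type*} [AddCommGroup V] [Module ℝ V] (m : ℕ) (X Y : V)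
    (α : Alt V (m + 1)) : iprod V m (X + Y) α = iprod V m X α + iprod V m Y α := by
  simp [iprod]

lemma iprod_smul_left {V : Type*} [AddCommGroup V] [Module ℝ V] (m : ℕ) (c : ℝ) (X : V)
    (α : Alt V (m + 1)) : iprod V m (c • X) α = c • iprod V m X α := by
  simp [iprod]

/-- The `∧^m V^*`-valued pairing on `W = V ⊕ ∧^{m+1} V^*`:
`⟨(X,α),(Y,β)⟩ = i_X β + i_Y α`. -/
def pairW (V : Type*) [AddCommGroup V] [Module ℝ V] (m : ℕ)
    (u v : V × Alt V (m + 1)) : Alt V m :=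
  iprod V m u.1 v.2 + iprod V m v.1 u.2

lemma pairW_add_left {V : Type*} [AddCommGroup V] [Module ℝ V] (m : ℕ)
    (u u' v : V × Alt V (m + 1)) :
    pairW V m (u + u') v = pairW V m u v + pairW V m u' v := by
  simp only [pairW, Prod.fst_add, Prod.snd_add, iprod_add_left, map_add]
  abel

lemma pairW_smul_left {V : Type*} [AddCommGroup V] [Module ℝ V] (m : ℕ) (c : ℝ)
    (u v : V × Alt V (m + 1)) :
    pairW V m (c • u) v = c • pairW V m u v := by
  simp only [pairW, Prod.smul_fst, Prod.smul_snd, iprod_smul_left, map_smul, smul_add]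

/-- A subspace of `W = V ⊕ ∧^{m+1}V^*` is isotropic if the pairing vanishes on it. -/
def IsIsotropic (V : Type*) [AddCommGroup V] [Module ℝ V] (m : ℕ)
    (L : Submodule ℝ (V × Alt V (m + 1))) : Prop :=
  ∀ u ∈ L, ∀ v ∈ L, pairW V m u v = 0

/-- The orthogonal `L^⊥` of a subspace `L ⊆ V ⊕ ∧^{m+1}V^*` w.r.t. the pairing. -/
def perpW (V : Type*) [AddCommGroup V] [Module ℝ V] (m : ℕ)
    (L : Submodule ℝ (V × Alt V (m + 1))) : Submodule ℝ (V × Alt V (m + 1)) where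
  carrier := {w | ∀ l ∈ L, pairW V m w l = 0}
  add_mem' := by
    intro a b ha hb l hl
    rw [pairW_add_left, ha l hl, hb l hl, add_zero]
  zero_mem' := by
    intro l hl
    simp [pairW, iprod]
  smul_mem' := by
    intro c a ha l hl
    rw [pairW_smul_left, ha l hl, smul_zero]

/-- The annihilator `Ann(E) ⊆ ∧^{m+1} V^*` of a subspace `E ⊆ V`. -/
def AnnE (V : Type*) [AddCommGroup V] [Module ℝ V] (m : ℕ) (E : Submodule ℝ V) :
    Submodule ℝ (Alt V (m + 1)) where
  carrier := {α | ∀ X ∈ E, iprod V m X α = 0}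
  add_mem' := by
    intro a b ha hb X hX
    rw [map_add, ha X hX, hb X hX, add_zero]
  zero_mem' := by intro X hX; simp
  smul_mem' := by
    intro c a ha X hX
    rw [map_smul, ha X hX, smul_zero]

/-- The annihilator `S° ⊆ V` of a subspace `S ⊆ ∧^{m+1} V^*`. -/
def polarS (V : Type*) [AddCommGroup V] [Module ℝ V] (m : ℕ)
    (S : Submodule ℝ (Alt V (m + 1))) : Submodule ℝ V where
  carrier := {X | ∀ α ∈ S, iprod V m X α = 0}
  add_mem' := by
    intro a b ha hb α hα
    show iprod V m (a + b) α = 0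
    rw [iprod_add_left, ha α hα, hb α hα, add_zero]
  zero_mem' := by
    intro α hα
    show iprod V m 0 α = 0
    simp [iprod]
  smul_mem' := by
    intro c a ha α hα
    show iprod V m (c • a) α = 0
    rw [iprod_smul_left, ha α hα, smul_zero]

/-- The `B`-field transform `e^B (X, α) = (X, α + i_X B)`. -/
def eB (V : Type*) [AddCommGroup V] [Module ℝ V] (m : ℕ) (B : Alt V (m + 2)) :
    (V × Alt V (m + 1)) →ₗ[ℝ] (V × Alt V (m + 1)) :=
  LinearMap.prod (LinearMap.fst ℝ V (Alt V (m + 1)))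
    (LinearMap.snd ℝ V (Alt V (m + 1)) + B.curryLeft.comp (LinearMap.fst ℝ V (Alt V (m + 1))))

/-- The projection `pr₁(L) ⊆ V` of a subspace `L ⊆ V ⊕ ∧^{m+1}V^*`. -/
def pr1 (V : Type*) [AddCommGroup V] [Module ℝ V] (m : ℕ)
    (L : Submodule ℝ (V × Alt V (m + 1))) : Submodule ℝ V :=
  Submodule.map (LinearMap.fst ℝ V (Alt V (m + 1))) L

/-- The projection `pr₂(L) ⊆ ∧^{m+1}V^*` of a subspace `L ⊆ V ⊕ ∧^{m+1}V^*`. -/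
def pr2S (V : Type*) [AddCommGroup V] [Module ℝ V] (m : ℕ)
    (L : Submodule ℝ (V × Alt V (m + 1))) : Submodule ℝ (Alt V (m + 1)) :=
  Submodule.map (LinearMap.snd ℝ V (Alt V (m + 1))) L

/-- `L ∩ V`, viewed as a subspace of `V` (identifying `V` with `V ⊕ 0`). -/
def capV (V : Type*) [AddCommGroup V] [Module ℝ V] (m : ℕ)
    (L : Submodule ℝ (V × Alt V (m + 1))) : Submodule ℝ V :=
  Submodule.comap (LinearMap.inl ℝ V (Alt V (m + 1))) L

/-- `L ∩ ∧^{m+1}V^*`, viewed as a subspace of `∧^{m+1}V^*`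
(identifying `∧^{m+1}V^*` with `0 ⊕ ∧^{m+1}V^*`). -/
def capF (V : Type*) [AddCommGroup V] [Module ℝ V] (m : ℕ)
    (L : Submodule ℝ (V × Alt V (m + 1))) : Submodule ℝ (Alt V (m + 1)) :=
  Submodule.comap (LinearMap.inr ℝ V (Alt V (m + 1))) L

/-- The graph `gr(ω) = {(X, i_X ω) : X ∈ V}` of `ω ∈ ∧^{m+2}V^*`. -/
def grOmega (V : Type*) [AddCommGroup V] [Module ℝ V] (m : ℕ) (ω : Alt V (m + 2)) :
    Submodule ℝ (V × Alt V (m + 1)) :=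
  LinearMap.range (LinearMap.prod LinearMap.id ω.curryLeft)

/-- `L` is weakly lagrangian if it is isotropic and `L ∩ V = pr₂(L)°`. -/
def IsWeaklyLagrangian (V : Type*) [AddCommGroup V] [Module ℝ V] (m : ℕ)
    (L : Submodule ℝ (V × Alt V (m + 1))) : Prop :=
  IsIsotropic V m L ∧ capV V m L = polarS V m (pr2S V m L)

lemma iprod_apply {V : Type*} [AddCommGroup V] [Module ℝ V] (m : ℕ) (X : V)
    (α : Alt V (m + 1)) (v : Fin m → V) :
    iprod V m X α v = α (Matrix.vecCons X v) := rfl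

lemma iprod_self {V : Type*} [AddCommGroup V] [Module ℝ V] (m : ℕ) (X : V)
    (B : Alt V (m + 2)) : iprod V m X (iprod V (m + 1) X B) = 0 := by
  ext v
  rw [iprod_apply, iprod_apply]
  exact B.map_eq_zero_of_eq _ (i := 0) (j := 1) rfl (by simp)

lemma iprod_swap {V : Type*} [AddCommGroup V] [Module ℝ V] (m : ℕ) (X Y : V)
    (B : Alt V (m + 2)) :
    iprod V m X (iprod V (m + 1) Y B) + iprod V m Y (iprod V (m + 1) X B) = 0 := by
  have h := iprod_self m (X + Y) B
  simpa [iprod_add_left, iprod_self, add_comm] using h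

lemma eB_apply {V : Type*} [AddCommGroup V] [Module ℝ V] (m : ℕ) (B : Alt V (m + 2))
    (u : V × Alt V (m + 1)) : eB V m B u = (u.1, u.2 + iprod V (m + 1) u.1 B) := rfl

/-- `e^B` is an isometry of the pairing. -/
lemma pairW_eB {V : Type*} [AddCommGroup V] [Module ℝ V] (m : ℕ) (B : Alt V (m + 2))
    (u v : V × Alt V (m + 1)) : pairW V m (eB V m B u) (eB V m B v) = pairW V m u v := by
  have h := iprod_swap m u.1 v.1 B
  simp only [pairW, eB_apply, map_add]
  rw [add_add_add_comm, h, add_zero]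

/-- Exactness of `i_X` for `X ≠ 0`: a form killed by `i_X` is `i_X (ξ ∧ γ)` where `ξ(X) = 1`. -/
lemma exists_iprod_eq {V : Type*} [AddCommGroup V] [Module ℝ V] (m : ℕ)
    {X : V} (hX : X ≠ 0) (γ : Alt V (m + 1)) (hγ : iprod V m X γ = 0) :
    ∃ B : Alt V (m + 2), iprod V (m + 1) X B = γ := by
  obtain ⟨ξ, hξ⟩ := Module.Projective.exists_dual_ne_zero ℝ hX
  -- `alternatizeUncurryFin (ξ ⊗ γ)` is the wedge product `ξ ∧ γ`.
  refine ⟨AlternatingMap.alternatizeUncurryFin (((ξ X)⁻¹ • ξ).smulRight γ), ?_⟩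
  ext v
  rw [iprod_apply, AlternatingMap.alternatizeUncurryFin_apply, Fin.sum_univ_succ,
    Finset.sum_eq_zero]
  · simp [hξ, Matrix.vecCons, Fin.removeNth_zero]
  · intro i _
    -- `X` remains the first argument of `γ` when a later argument is removed.
    have h : Fin.removeNth i.succ (Matrix.vecCons X v : Fin (m + 2) → V)
        = Matrix.vecCons X (Fin.removeNth i v) := by
      funext j
      refine Fin.cases ?_ (fun j => ?_) j <;> simp [Fin.removeNth, Matrix.vecCons]
    have h0 : γ (Matrix.vecCons X (Fin.removeNth i v)) = 0 := by
      rw [← iprod_apply, hγ, AlternatingMap.zero_apply]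
    rw [h]
    simp [h0]

/-- `(X, 0) ∈ L^⊥` exactly when `X ∈ pr₂(L)°`. -/
lemma mem_polarS_pr2S {V : Type*} [AddCommGroup V] [Module ℝ V] (m : ℕ)
    (L : Submodule ℝ (V × Alt V (m + 1))) (X : V) :
    X ∈ polarS V m (pr2S V m L) ↔ ((X, 0) : V × Alt V (m + 1)) ∈ perpW V m L := by
  constructor
  · intro h l hl
    have := h l.2 ⟨l, hl, rfl⟩
    simpa [pairW] using this
  · rintro h _ ⟨l, hl, rfl⟩
    simpa [pairW] using h l hl

lemma isWeaklyLagrangian_of_eq_perpW {V : Type*} [AddCommGroup V] [Module ℝ V] (m : ℕ)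
    (L : Submodule ℝ (V × Alt V (m + 1))) (h : L = perpW V m L) :
    IsWeaklyLagrangian V m L := by
  refine ⟨fun u hu v hv => ?_, ?_⟩
  · rw [h] at hu
    exact hu v hv
  · ext X
    rw [mem_polarS_pr2S, ← h]
    rfl

lemma eB_neg_eB {V : Type*} [AddCommGroup V] [Module ℝ V] (m : ℕ) (B : Alt V (m + 2))
    (u : V × Alt V (m + 1)) : eB V m B (eB V m (-B) u) = u := by
  simp [eB_apply]

lemma map_eB_perpW {V : Type*} [AddCommGroup V] [Module ℝ V] (m : ℕ) (B : Alt V (m + 2))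
    (L : Submodule ℝ (V × Alt V (m + 1))) :
    Submodule.map (eB V m B) (perpW V m L) = perpW V m (Submodule.map (eB V m B) L) := by
  ext w
  constructor
  · rintro ⟨u, hu, rfl⟩ _ ⟨l, hl, rfl⟩
    rw [pairW_eB]
    exact hu l hl
  · intro hw
    refine ⟨eB V m (-B) w, fun l hl => ?_, eB_neg_eB m B w⟩
    rw [← pairW_eB m B, eB_neg_eB]
    exact hw _ ⟨l, hl, rfl⟩

/-- For a standard weakly lagrangian `L` with `pr₁(L) ≠ {0}`,
`e^B(L)` is weakly lagrangian for every `B` iff `L` is lagrangian.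
(Here the `k` of the statement is `m + 1`.) -/
theorem stmt_16 {V : Type*} [AddCommGroup V] [Module ℝ V] [FiniteDimensional ℝ V]
    (m : ℕ) (hmn : m + 1 ≤ finrank ℝ V - 1)
    (L : Submodule ℝ (V × Alt V (m + 1)))
    (hwl : IsWeaklyLagrangian V m L)
    (hstd : polarS V m (AnnE V m (pr1 V m L)) = pr1 V m L)
    (hE : pr1 V m L ≠ ⊥) :
    (∀ B : Alt V (m + 2),
        IsWeaklyLagrangian V m (Submodule.map (eB V m B) L)) ↔
      L = perpW V m L := by
  constructor
  · intro hB
    obtain ⟨hiso, -⟩ := hwl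
    have key : ∀ (X : V) (γ : Alt V (m + 1)), X ≠ 0 → iprod V m X γ = 0 →
        (X, γ) ∈ perpW V m L → (X, γ) ∈ L := by
      intro X γ hX hγ hmem
      obtain ⟨B, hBX⟩ := exists_iprod_eq m hX (-γ) (by rw [map_neg, hγ, neg_zero])
      have he : eB V m B (X, γ) = (X, 0) := by
        rw [eB_apply]
        simp [hBX]
      have h1 : X ∈ polarS V m (pr2S V m (Submodule.map (eB V m B) L)) := by
        rw [mem_polarS_pr2S, ← map_eB_perpW]
        exact ⟨_, hmem, he⟩
      rw [← (hB B).2] at h1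
      obtain ⟨u, hu, hue⟩ : ∃ u ∈ L, eB V m B u = (X, 0) := h1
      have huv : u = (X, γ) := by
        have h2 := congrArg (eB V m (-B)) (hue.trans he.symm)
        have h3 := eB_neg_eB m (-B)
        rw [neg_neg] at h3
        rwa [h3, h3] at h2
      exact huv ▸ hu
    obtain ⟨X₀, ⟨⟨X, γ⟩, hXγ, rfl⟩, hX⟩ := Submodule.exists_mem_ne_zero_of_ne_bot hE
    change X ≠ 0 at hX
    have hself : ∀ u ∈ L, iprod V m u.1 u.2 = 0 := by
      intro u hu
      have h := hiso u hu u hu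
      rw [pairW, ← two_smul ℝ] at h
      exact (smul_eq_zero.mp h).resolve_left two_ne_zero
    have hAnn : ∀ α ∈ AnnE V m (pr1 V m L), ((0, α) : V × Alt V (m + 1)) ∈ L := by
      intro α hα
      have h1 : (X, γ + α) ∈ L := by
        refine key X _ hX ?_ fun l hl => ?_
        · rw [map_add, hself _ hXγ, hα X ⟨_, hXγ, rfl⟩, add_zero]
        · have h2 := hiso _ hXγ l hl
          have h3 : iprod V m l.1 α = 0 := hα l.1 ⟨l, hl, rfl⟩
          simp only [pairW] at h2 ⊢
          rw [map_add, h3, add_zero, h2]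
      simpa using L.sub_mem h1 hXγ
    have hle : L ≤ perpW V m L := fun u hu v hv => hiso u hu v hv
    refine le_antisymm hle fun w hw => ?_
    have hw1 : w.1 ∈ pr1 V m L := by
      rw [← hstd]
      intro α hα
      simpa [pairW, iprod] using hw _ (hAnn α hα)
    obtain ⟨u, hu, huw⟩ := hw1
    change u.1 = w.1 at huw
    have hd : w - u ∈ perpW V m L := sub_mem hw (hle hu)
    have hd0 : w - u = (0, w.2 - u.2) := by
      ext1 <;> simp [huw]
    have hα : w.2 - u.2 ∈ AnnE V m (pr1 V m L) := by
      rintro _ ⟨l, hl, rfl⟩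
      rw [hd0] at hd
      simpa [pairW, iprod] using hd l hl
    have h := L.add_mem (hAnn _ hα) hu
    rwa [← hd0, sub_add_cancel] at h
  · intro h B
    apply isWeaklyLagrangian_of_eq_perpW
    rw [← map_eB_perpW, ← h]

end
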